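/- arXiv:2502.12394 — 3 statements merged into one kernel-verified Lean document; each statement's English description precedes it below -/
import Mathlib

section
/- For every integer n ≥ 1, the number of partitions (of any sum) with perimeter n equals 2^{n−1}. -/
open Multiset Finset Filter

/-- A partition is encoded as a nonempty multiset of positive integers (its parts). -/
def IsPartition (M : Multiset ℕ) : Prop := M ≠ 0 ∧ ∀ x ∈ M, 0 < x

/-- The perimeter of a partition: (largest part) + (number of parts) - 1. -/
def perim (M : Multiset ℕ) : ℕ := M.sup + Multiset.card M - 1

/-- `rP n P` counts the partitions (of any sum) with perimeter `n` satisfying `P`. -/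
noncomputable def rP (n : ℕ) (P : Multiset ℕ → Prop) : ℕ :=
  Set.ncard {M : Multiset ℕ | IsPartition M ∧ perim M = n ∧ P M}

/-!
A partition with largest part `a + 1` and `k + 1` parts is determined by its parts other than one
copy of the largest: an arbitrary multiset of size `k` drawn from `{1, …, a + 1}`. By stars and bars
there are `(a + k).choose k` of these. Such a partition has perimeter `a + k + 1`, so the partitions
of perimeter `n + 1` are counted by the `n`-th row of Pascal's triangle, whose sum is `2 ^ n`.
-/

theorem finset_card_sym {α : Type*} [DecidableEq α] (s : Finset α) (k : ℕ) :
    #(s.sym k) = Nat.multichoose #s k := by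
  conv_lhs => rw [← s.attach_map_val, Finset.sym_map, Finset.card_map, Finset.attach_eq_univ,
    Finset.sym_univ, Finset.card_univ, Sym.card_sym_eq_multichoose, Fintype.card_coe]

section LinearOrder

variable {α : Type*} [LinearOrder α] [OrderBot α]

theorem multiset_sup_mem {M : Multiset α} (hM : M ≠ 0) : M.sup ∈ M := by
  obtain ⟨a, ha, h_sup⟩ := Finset.sup_mem_of_nonempty (f := id) (Multiset.toFinset_nonempty.2 hM)
  rw [Finset.sup_def, Multiset.map_id, Multiset.toFinset_val, Multiset.sup_dedup] at h_sup
  exact h_sup ▸ Multiset.mem_toFinset.1 ha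

theorem ne_zero_and_sup_eq_iff_exists_cons {M : Multiset α} {a : α} :
    M ≠ 0 ∧ M.sup = a ↔ ∃ N : Multiset α, (∀ x ∈ N, x ≤ a) ∧ a ::ₘ N = M := by
  constructor
  · rintro ⟨hM, rfl⟩
    obtain ⟨N, hN⟩ := Multiset.exists_cons_of_mem (multiset_sup_mem hM)
    exact ⟨N, fun x hx => Multiset.le_sup (hN ▸ Multiset.mem_cons_of_mem hx), hN.symm⟩
  · rintro ⟨N, hN, rfl⟩
    exact ⟨Multiset.cons_ne_zero,
      (Multiset.sup_cons a N).trans (sup_eq_left.2 (Multiset.sup_le.2 hN))⟩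

end LinearOrder

/-- The partitions with largest part `a + 1` and `k + 1` parts, each built by adding the part
`a + 1` to a multiset of `k` elements of `{1, …, a + 1}`. Both parameters are shifted by one because
a partition has a positive largest part and at least one part. -/
def partitionsWithMaxAndCard (a k : ℕ) : Finset (Multiset ℕ) :=
  ((Finset.Icc 1 (a + 1)).sym k).image fun s : Sym ℕ k => (a + 1) ::ₘ (s : Multiset ℕ)

theorem mem_partitionsWithMaxAndCard {a k : ℕ} {M : Multiset ℕ} :
    M ∈ partitionsWithMaxAndCard a k ↔
      IsPartition M ∧ M.sup = a + 1 ∧ Multiset.card M = k + 1 := by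
  simp only [partitionsWithMaxAndCard, Finset.mem_image, Finset.mem_sym_iff, Finset.mem_Icc]
  constructor
  · rintro ⟨s, hs, rfl⟩
    obtain ⟨h_ne, h_sup⟩ :=
      ne_zero_and_sup_eq_iff_exists_cons.2 ⟨(s : Multiset ℕ), fun x hx => (hs x hx).2, rfl⟩
    have h_pos : ∀ x ∈ (a + 1) ::ₘ (s : Multiset ℕ), 0 < x :=
      Multiset.forall_mem_cons.2 ⟨a.succ_pos, fun x hx => (hs x hx).1⟩
    exact ⟨⟨h_ne, h_pos⟩, h_sup, by rw [Multiset.card_cons, Sym.card_coe]⟩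
  · rintro ⟨⟨h_ne, h_pos⟩, h_sup, h_card⟩
    obtain ⟨N, h_le, rfl⟩ := ne_zero_and_sup_eq_iff_exists_cons.1 ⟨h_ne, h_sup⟩
    rw [Multiset.card_cons, Nat.add_right_cancel_iff] at h_card
    exact ⟨Sym.mk N h_card, fun x hx => ⟨h_pos x (Multiset.mem_cons_of_mem hx), h_le x hx⟩, rfl⟩

theorem card_partitionsWithMaxAndCard (a k : ℕ) :
    #(partitionsWithMaxAndCard a k) = (a + k).choose k := by
  have h_inj : Function.Injective fun s : Sym ℕ k => (a + 1) ::ₘ (s : Multiset ℕ) :=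
    fun _ _ h => Sym.coe_injective ((Multiset.cons_inj_right (a + 1)).1 h)
  rw [partitionsWithMaxAndCard, Finset.card_image_of_injective _ h_inj, finset_card_sym,
    Nat.card_Icc, Nat.add_sub_cancel, Nat.multichoose_eq, Nat.add_right_comm, Nat.add_sub_cancel]

theorem pairwise_disjoint_partitionsWithMaxAndCard :
    Pairwise fun p q : ℕ × ℕ =>
      Disjoint (partitionsWithMaxAndCard p.1 p.2) (partitionsWithMaxAndCard q.1 q.2) := by
  refine fun p q hpq => Finset.disjoint_left.2 fun M hp hq => hpq ?_
  obtain ⟨-, hp_sup, hp_card⟩ := mem_partitionsWithMaxAndCard.1 hp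
  obtain ⟨-, hq_sup, hq_card⟩ := mem_partitionsWithMaxAndCard.1 hq
  exact Prod.ext (by omega) (by omega)

theorem isPartition_and_perim_eq_succ_iff {M : Multiset ℕ} {n : ℕ} :
    IsPartition M ∧ perim M = n + 1 ↔
      ∃ p ∈ HasAntidiagonal.antidiagonal n, M ∈ partitionsWithMaxAndCard p.1 p.2 := by
  simp only [Prod.exists, HasAntidiagonal.mem_antidiagonal, mem_partitionsWithMaxAndCard, perim]
  constructor
  · rintro ⟨hM, h_perim⟩
    have h_sup : 0 < M.sup := hM.2 _ (multiset_sup_mem hM.1)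
    have h_card : 0 < Multiset.card M := Multiset.card_pos.2 hM.1
    exact ⟨M.sup - 1, Multiset.card M - 1, by omega, hM, by omega, by omega⟩
  · rintro ⟨a, k, h_sum, hM, h_sup, h_card⟩
    exact ⟨hM, by omega⟩

theorem sum_antidiagonal_add_choose_snd (n : ℕ) :
    ∑ p ∈ HasAntidiagonal.antidiagonal n, (p.1 + p.2).choose p.2 = 2 ^ n := by
  calc ∑ p ∈ HasAntidiagonal.antidiagonal n, (p.1 + p.2).choose p.2
      = ∑ p ∈ HasAntidiagonal.antidiagonal n, n.choose p.1 := Finset.sum_congr rfl fun p hp => by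
        rw [← HasAntidiagonal.mem_antidiagonal.1 hp, Nat.choose_symm_add]
    _ = ∑ i ∈ Finset.range (n + 1), n.choose i :=
        Finset.Nat.sum_antidiagonal_eq_sum_range_succ (fun i _ => n.choose i) n
    _ = 2 ^ n := Nat.sum_range_choose n

theorem stmt_8 (n : ℕ) (hn : 1 ≤ n) : rP n (fun _ => True) = 2 ^ (n - 1) := by
  obtain ⟨m, rfl⟩ : ∃ m, n = m + 1 := Nat.exists_eq_add_of_le' hn
  have h_union : {M : Multiset ℕ | IsPartition M ∧ perim M = m + 1 ∧ True} =
      (HasAntidiagonal.antidiagonal m).biUnion fun p => partitionsWithMaxAndCard p.1 p.2 := by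
    ext M
    simp only [and_true, Set.mem_ofPred_eq, Finset.mem_coe, Finset.mem_biUnion,
      isPartition_and_perim_eq_succ_iff]
  rw [rP, h_union, Set.ncard_coe_finset,
    Finset.card_biUnion fun p _ q _ hpq => pairwise_disjoint_partitionsWithMaxAndCard hpq]
  simp only [card_partitionsWithMaxAndCard, sum_antidiagonal_add_choose_snd, Nat.add_sub_cancel]
end

section
/- For integers 0 < a < b ≤ d, the following identity holds in the ring of formal power series ℤ[[q]]: (1 − 2q + q² − q^d) · ∑_{n≥1} ℓ_d^{(a,b)}(n) qⁿ = q^a − q^{a+1} + q^b. -/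
open Multiset Finset Filter

/-- `ellP d a b n`: partitions of perimeter n with every part ≡ a or ≡ b (mod d). -/
noncomputable def ellP (d a b n : ℕ) : ℕ :=
  rP n (fun M => ∀ x ∈ M, x % d = a % d ∨ x % d = b % d)

/-!
Let `T k` be the generating function by perimeter of the partitions with allowed parts, all of them
greater than `k`. If `m` is the least allowed part greater than `k`, then removing one copy of `m`
from a partition that contains it lowers the perimeter by one, unless the partition is `{m}`;
hence `(1 - X) * T k = X ^ m + T m`. When the allowed parts are those congruent to `a` or `b`
modulo `d`, this gives `(1 - X) * T 0 = X ^ a + T a` and `(1 - X) * T a = X ^ b + T b`.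
Subtracting `d` from every part shows `T b = T d = X ^ d * T 0`, which closes the system.
-/

section Perimeter

variable {M : Multiset ℕ} {m : ℕ}

theorem sup_map_add_right (hM : M ≠ 0) (k : ℕ) : (M.map (· + k)).sup = M.sup + k := by
  induction M using Multiset.induction_on with
  | empty => exact absurd rfl hM
  | cons x N ih =>
    rcases eq_or_ne N 0 with rfl | hN
    · simp
    · rw [Multiset.map_cons, Multiset.sup_cons, Multiset.sup_cons, ih hN]
      exact max_add_add_right x N.sup k

theorem perim_singleton (m : ℕ) : perim {m} = m := by
  simp [perim]

theorem perim_map_add_right (hM : M ≠ 0) (k : ℕ) : perim (M.map (· + k)) = perim M + k := by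
  have hcard : 0 < Multiset.card M := Multiset.card_pos.2 hM
  rw [perim, perim, sup_map_add_right hM, Multiset.card_map]
  omega

theorem perim_cons_of_le (hM : M ≠ 0) (hm : ∀ x ∈ M, m ≤ x) : perim (m ::ₘ M) = perim M + 1 := by
  obtain ⟨x, hx⟩ := Multiset.exists_mem_of_ne_zero hM
  have hsup : m ≤ M.sup := (hm x hx).trans (Multiset.le_sup hx)
  have hcard : 0 < Multiset.card M := Multiset.card_pos.2 hM
  rw [perim, perim, Multiset.sup_cons, sup_eq_right.2 hsup, Multiset.card_cons]
  omega

theorem le_perim_of_mem (hm : m ∈ M) : m ≤ perim M := by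
  have hsup : m ≤ M.sup := Multiset.le_sup hm
  have hcard : 0 < Multiset.card M := Multiset.card_pos_iff_exists_mem.2 ⟨m, hm⟩
  rw [perim]
  omega

theorem IsPartition.card_le_perim (hM : IsPartition M) : Multiset.card M ≤ perim M := by
  obtain ⟨x, hx⟩ := Multiset.exists_mem_of_ne_zero hM.1
  have hsup : 0 < M.sup := (hM.2 x hx).trans_le (Multiset.le_sup hx)
  rw [perim]
  omega

theorem isPartition_singleton (hm : 0 < m) : IsPartition {m} := by
  simpa [IsPartition] using hm

end Perimeter

/-- The partitions of perimeter `n` all of whose parts satisfy `p`: the set counted by `rP`. -/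
def partitionsOfPerim (p : ℕ → Prop) (n : ℕ) : Set (Multiset ℕ) :=
  {M | IsPartition M ∧ perim M = n ∧ ∀ x ∈ M, p x}

/-- The generating function, by perimeter, of the partitions all of whose parts satisfy `p`. -/
noncomputable def perimGenFun (p : ℕ → Prop) : PowerSeries ℤ :=
  PowerSeries.mk fun n => ((partitionsOfPerim p n).ncard : ℤ)

section GeneratingFunction

variable {p q : ℕ → Prop} {m : ℕ}

theorem partitionsOfPerim_congr (h : ∀ x, 0 < x → (p x ↔ q x)) (n : ℕ) :
    partitionsOfPerim p n = partitionsOfPerim q n := by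
  ext M
  exact and_congr_right fun hM => and_congr_right fun _ =>
    forall₂_congr fun x hx => h x (hM.2 x hx)

theorem perimGenFun_congr (h : ∀ x, 0 < x → (p x ↔ q x)) : perimGenFun p = perimGenFun q := by
  simp only [perimGenFun, partitionsOfPerim_congr h]

theorem finite_partitionsOfPerim (p : ℕ → Prop) (n : ℕ) : (partitionsOfPerim p n).Finite := by
  refine (Set.finite_Iic (n • Multiset.range (n + 1))).subset ?_
  rintro M ⟨hM, rfl, -⟩
  refine Multiset.le_iff_count.2 fun x => ?_
  by_cases hx : x ∈ M
  · have hrange : Multiset.count x (Multiset.range (perim M + 1)) = 1 :=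
      Multiset.count_eq_one_of_mem (Multiset.nodup_range _)
        (Multiset.mem_range.2 (Nat.lt_succ_of_le (le_perim_of_mem hx)))
    rw [Multiset.count_nsmul, hrange, mul_one]
    exact (Multiset.count_le_card x M).trans hM.card_le_perim
  · simp [Multiset.count_eq_zero_of_notMem hx]

theorem partitionsOfPerim_eq_empty {n : ℕ} (h : ∀ x, 0 < x → p x → n < x) :
    partitionsOfPerim p n = ∅ := by
  refine Set.eq_empty_of_forall_notMem ?_
  rintro M ⟨hM, rfl, hp⟩
  obtain ⟨x, hx⟩ := Multiset.exists_mem_of_ne_zero hM.1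
  exact (h x (hM.2 x hx) (hp x hx)).not_ge (le_perim_of_mem hx)

theorem partitionsOfPerim_zero (p : ℕ → Prop) : partitionsOfPerim p 0 = ∅ :=
  partitionsOfPerim_eq_empty fun _ hx _ => hx

theorem partitionsOfPerim_add_eq_image {k : ℕ} (h : ∀ x, 0 < x → p x → k < x) (n : ℕ) :
    partitionsOfPerim p (n + k) =
      Multiset.map (· + k) '' partitionsOfPerim (fun x => p (x + k)) n := by
  ext M
  constructor
  · rintro ⟨hM, hperim, hp⟩
    have hk : ∀ x ∈ M, k < x := fun x hx => h x (hM.2 x hx) (hp x hx)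
    have hsub : (M.map (· - k)).map (· + k) = M := by
      rw [Multiset.map_map]
      exact (Multiset.map_congr rfl fun x hx => Nat.sub_add_cancel (hk x hx).le).trans M.map_id
    have hne : M.map (· - k) ≠ 0 := mt Multiset.map_eq_zero.1 hM.1
    refine ⟨M.map (· - k), ⟨⟨hne, ?_⟩, ?_, ?_⟩, hsub⟩
    · simpa only [Multiset.mem_map, forall_exists_index, and_imp, forall_apply_eq_imp_iff₂,
        Nat.sub_pos_iff_lt] using hk
    · rw [← hsub, perim_map_add_right hne] at hperim
      exact Nat.add_right_cancel hperim
    · intro y hy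
      exact hp _ (hsub ▸ Multiset.mem_map_of_mem (· + k) hy)
  · rintro ⟨N, ⟨hN, rfl, hp⟩, rfl⟩
    refine ⟨⟨mt Multiset.map_eq_zero.1 hN.1, ?_⟩, perim_map_add_right hN.1 k, ?_⟩
    · simpa only [Multiset.mem_map, forall_exists_index, and_imp, forall_apply_eq_imp_iff₂]
        using fun x hx => Nat.add_pos_left (hN.2 x hx) k
    · simpa only [Multiset.mem_map, forall_exists_index, and_imp, forall_apply_eq_imp_iff₂] using hp

theorem perimGenFun_eq_X_pow_mul {k : ℕ} (h : ∀ x, 0 < x → p x → k < x) :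
    perimGenFun p = PowerSeries.X ^ k * perimGenFun fun x => p (x + k) := by
  ext n
  rw [PowerSeries.coeff_X_pow_mul', perimGenFun, PowerSeries.coeff_mk]
  split_ifs with hkn
  · obtain ⟨j, rfl⟩ := Nat.exists_eq_add_of_le' hkn
    rw [partitionsOfPerim_add_eq_image h,
      Set.ncard_image_of_injective _ (Multiset.map_injective (add_left_injective k)),
      Nat.add_sub_cancel, perimGenFun, PowerSeries.coeff_mk]
  · rw [partitionsOfPerim_eq_empty fun x hx hp => (not_le.1 hkn).trans (h x hx hp),
      Set.ncard_empty, Nat.cast_zero]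

theorem partitionsOfPerim_succ_inter_mem (hm : 0 < m) (hpm : p m) (hmin : ∀ x, 0 < x → p x → m ≤ x)
    (n : ℕ) :
    partitionsOfPerim p (n + 1) ∩ {M | m ∈ M} =
      Multiset.cons m '' partitionsOfPerim p n ∪ {M | M = {m} ∧ n + 1 = m} := by
  ext M
  constructor
  · rintro ⟨⟨hM, hperim, hp⟩, hmM⟩
    obtain ⟨N, rfl⟩ := Multiset.exists_cons_of_mem hmM
    rcases eq_or_ne N 0 with rfl | hN
    · exact Or.inr ⟨rfl, hperim.symm.trans (perim_singleton m)⟩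
    · rw [Multiset.forall_mem_cons] at hp
      have hpos : ∀ x ∈ N, 0 < x := (Multiset.forall_mem_cons.1 hM.2).2
      rw [perim_cons_of_le hN fun x hx => hmin x (hpos x hx) (hp.2 x hx)] at hperim
      exact Or.inl ⟨N, ⟨⟨hN, hpos⟩, Nat.add_right_cancel hperim, hp.2⟩, rfl⟩
  · rintro (⟨N, ⟨hN, rfl, hp⟩, rfl⟩ | ⟨rfl, rfl⟩)
    · exact ⟨⟨⟨Multiset.cons_ne_zero, Multiset.forall_mem_cons.2 ⟨hm, hN.2⟩⟩,
        perim_cons_of_le hN.1 fun x hx => hmin x (hN.2 x hx) (hp x hx),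
        Multiset.forall_mem_cons.2 ⟨hpm, hp⟩⟩, Multiset.mem_cons_self m N⟩
    · exact ⟨⟨isPartition_singleton hm, perim_singleton _, by simpa using hpm⟩,
        Multiset.mem_singleton_self _⟩

theorem partitionsOfPerim_diff_mem (hmin : ∀ x, 0 < x → p x → m ≤ x) (n : ℕ) :
    partitionsOfPerim p n \ {M | m ∈ M} = partitionsOfPerim (fun x => p x ∧ m < x) n := by
  ext M
  constructor
  · rintro ⟨⟨hM, hperim, hp⟩, hmM⟩
    refine ⟨hM, hperim, fun x hx => ⟨hp x hx, (hmin x (hM.2 x hx) (hp x hx)).lt_of_ne ?_⟩⟩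
    rintro rfl
    exact hmM hx
  · rintro ⟨hM, hperim, hp⟩
    exact ⟨⟨hM, hperim, fun x hx => (hp x hx).1⟩, fun hmM => (hp m hmM).2.false⟩

theorem ncard_partitionsOfPerim_succ (hm : 0 < m) (hpm : p m) (hmin : ∀ x, 0 < x → p x → m ≤ x)
    (n : ℕ) :
    (partitionsOfPerim p (n + 1)).ncard = (partitionsOfPerim p n).ncard +
      (if n + 1 = m then 1 else 0) + (partitionsOfPerim (fun x => p x ∧ m < x) (n + 1)).ncard := by
  have hcons : (Multiset.cons m '' partitionsOfPerim p n).ncard = (partitionsOfPerim p n).ncard :=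
    Set.ncard_image_of_injective _ fun _ _ => (Multiset.cons_inj_right m).1
  rw [← Set.ncard_inter_add_ncard_sdiff_eq_ncard _ {M | m ∈ M} (finite_partitionsOfPerim p _),
    partitionsOfPerim_succ_inter_mem hm hpm hmin, partitionsOfPerim_diff_mem hmin]
  split_ifs with hnm
  · have hempty : partitionsOfPerim p n = ∅ :=
      partitionsOfPerim_eq_empty fun x hx hp => by have := hmin x hx hp; omega
    simp [hempty, hnm]
  · simp [hnm, hcons]

theorem one_sub_X_mul_perimGenFun (hm : 0 < m) (hpm : p m) (hmin : ∀ x, 0 < x → p x → m ≤ x) :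
    (1 - PowerSeries.X) * perimGenFun p =
      PowerSeries.X ^ m + perimGenFun fun x => p x ∧ m < x := by
  rw [sub_mul, one_mul, sub_eq_iff_eq_add']
  ext n
  cases n with
  | zero => simp [perimGenFun, partitionsOfPerim_zero, hm.ne']
  | succ n =>
    simp only [perimGenFun, _root_.map_add, PowerSeries.coeff_succ_X_mul, PowerSeries.coeff_X_pow,
      PowerSeries.coeff_mk, ncard_partitionsOfPerim_succ hm hpm hmin]
    push_cast
    ring

theorem perimGenFun_and_gt_period {d : ℕ} (hp : Function.Periodic p d) :
    perimGenFun (fun x => p x ∧ d < x) = PowerSeries.X ^ d * perimGenFun p := by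
  rw [perimGenFun_eq_X_pow_mul fun x _ hx => hx.2]
  congr 1
  refine perimGenFun_congr fun x hx => ?_
  rw [hp x]
  exact and_iff_left (Nat.lt_add_of_pos_left hx)

end GeneratingFunction

theorem mod_eq_mod_iff_of_le {d x y : ℕ} (hx : 0 < x) (hxd : x ≤ d) (hy : 0 < y) (hyd : y ≤ d) :
    x % d = y % d ↔ x = y :=
  (Nat.mod_injOn_Ico 1 d).eq_iff (Finset.mem_coe.2 (Finset.mem_Ico.2 ⟨hx, by omega⟩))
    (Finset.mem_coe.2 (Finset.mem_Ico.2 ⟨hy, by omega⟩))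

theorem mk_ellP_eq_perimGenFun (d a b : ℕ) :
    PowerSeries.mk (fun n => if n = 0 then 0 else (ellP d a b n : ℤ)) =
      perimGenFun fun x => x % d = a % d ∨ x % d = b % d := by
  ext n
  rw [perimGenFun, PowerSeries.coeff_mk, PowerSeries.coeff_mk]
  split_ifs with hn
  · rw [hn, partitionsOfPerim_zero, Set.ncard_empty, Nat.cast_zero]
  · rfl

theorem stmt_12 (d a b : ℕ) (ha : 0 < a) (hab : a < b) (hb : b ≤ d) :
    ((1 : PowerSeries ℤ) - 2 * PowerSeries.X + PowerSeries.X ^ 2 - PowerSeries.X ^ d) *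
        PowerSeries.mk (fun n => if n = 0 then 0 else (ellP d a b n : ℤ)) =
      PowerSeries.X ^ a - PowerSeries.X ^ (a + 1) + PowerSeries.X ^ b := by
  set p : ℕ → Prop := fun x => x % d = a % d ∨ x % d = b % d
  have hp_le : ∀ x, 0 < x → x ≤ d → (p x ↔ x = a ∨ x = b) := fun x hx hxd =>
    or_congr (mod_eq_mod_iff_of_le hx hxd ha (hab.le.trans hb))
      (mod_eq_mod_iff_of_le hx hxd (ha.trans hab) hb)
  have hp_periodic : Function.Periodic p d := fun x => by simp only [p, Nat.add_mod_right]
  have hstep_a : (1 - PowerSeries.X) * perimGenFun p =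
      PowerSeries.X ^ a + perimGenFun fun x => p x ∧ a < x :=
    one_sub_X_mul_perimGenFun ha (Or.inl rfl) (by grind)
  have hstep_b : (1 - PowerSeries.X) * perimGenFun (fun x => p x ∧ a < x) =
      PowerSeries.X ^ b + perimGenFun fun x => (p x ∧ a < x) ∧ b < x :=
    one_sub_X_mul_perimGenFun (ha.trans hab) ⟨Or.inr rfl, hab⟩ (by grind)
  have hgap : perimGenFun (fun x => (p x ∧ a < x) ∧ b < x) = perimGenFun fun x => p x ∧ d < x :=
    perimGenFun_congr (by grind)
  have hperiod := perimGenFun_and_gt_period hp_periodic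
  rw [mk_ellP_eq_perimGenFun]
  linear_combination (1 - PowerSeries.X) * hstep_a + hstep_b + hgap + hperiod
end

section
/- The following identity holds as formal power series in the variables x, y, z, q over ℤ: (1 − (x+y)q + (1−z)x y² q³) · ∑_{α,λ,n ≥ 1} ∑_{j ≥ 0} FD_{j,2}(α,λ,n) x^α y^λ z^j qⁿ = x y q (1 − (1−z) y q). -/
open Multiset Finset Filter

/-- `FDt j α lam n`: partitions with perimeter n, largest part α, lam parts, and exactly j
distinct part values repeated (≥ 2 times). -/
noncomputable def FDt (j α lam n : ℕ) : ℕ :=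
  Set.ncard {M : Multiset ℕ | IsPartition M ∧ M.sup = α ∧ Multiset.card M = lam ∧
    perim M = n ∧ (M.toFinset.filter (fun v => 2 ≤ M.count v)).card = j}

/-- The generating series ∑ FDt(j,α,λ,n) x^α y^λ z^j q^n, with variables
x = X 0, y = X 1, z = X 2, q = X 3. -/
noncomputable def FDseries : MvPowerSeries (Fin 4) ℤ :=
  fun e => if 1 ≤ e 0 ∧ 1 ≤ e 1 ∧ 1 ≤ e 3 then (FDt (e 2) (e 0) (e 1) (e 3) : ℤ) else 0

/-!
Weigh a partition by `x ^ (largest part) * y ^ (number of parts) * z ^ (repeated values) * q ^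
perimeter`, and let `F = A + C`, where `A` enumerates the partitions whose largest part occurs once
and `C` those whose largest part is repeated. Deleting one copy of a repeated largest part gives
`C = yq C + yzq A`, the factor `z` appearing when a second copy is created. If the largest part `a`
occurs once, then either the partition is `(1)`, or `a - 1` is not a part and `a` may be lowered to
`a - 1`, or `a - 1` is a part and `a` may be deleted, so that `A = xyq + xq A + xyq² F`.
Eliminating `A` and `C` gives the identity.
-/

section EnumeratingSeries

variable {α β σ R : Type*} [Semiring R]

variable (R) in
/-- The enumerating power series `∑ a ∈ S, X ^ w a` of a set `S` with respect to a multi-exponent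
statistic `w`. A coefficient is the cardinality of a fibre of `w` on `S`, hence `0` when that
fibre is infinite. -/
noncomputable def enumSeries (w : α → σ →₀ ℕ) (S : Set α) : MvPowerSeries σ R :=
  fun e => ({a ∈ S | w a = e}.ncard : R)

lemma coeff_enumSeries (w : α → σ →₀ ℕ) (S : Set α) (e : σ →₀ ℕ) :
    MvPowerSeries.coeff e (enumSeries R w S) = ({a ∈ S | w a = e}.ncard : R) :=
  rfl

lemma enumSeries_singleton (w : α → σ →₀ ℕ) (a : α) :
    enumSeries R w {a} = MvPowerSeries.monomial (w a) 1 := by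
  classical
  ext e
  rw [coeff_enumSeries, MvPowerSeries.coeff_monomial]
  split_ifs with h
  · have fiber_eq : {b ∈ ({a} : Set α) | w b = e} = {a} := by grind
    rw [fiber_eq, Set.ncard_singleton, Nat.cast_one]
  · have fiber_eq : {b ∈ ({a} : Set α) | w b = e} = ∅ := by grind
    rw [fiber_eq, Set.ncard_empty, Nat.cast_zero]

lemma enumSeries_union {w : α → σ →₀ ℕ} {S T : Set α} (hST : Disjoint S T)
    (hS : ∀ e, {a ∈ S | w a = e}.Finite) (hT : ∀ e, {a ∈ T | w a = e}.Finite) :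
    enumSeries R w (S ∪ T) = enumSeries R w S + enumSeries R w T := by
  ext e
  have fiber_eq : {a ∈ S ∪ T | w a = e} = {a ∈ S | w a = e} ∪ {a ∈ T | w a = e} := by
    ext a
    exact or_and_right
  have fibers_disjoint : Disjoint {a ∈ S | w a = e} {a ∈ T | w a = e} :=
    hST.mono (Set.sep_subset _ _) (Set.sep_subset _ _)
  rw [_root_.map_add, coeff_enumSeries, coeff_enumSeries, coeff_enumSeries, fiber_eq,
    Set.ncard_union_eq fibers_disjoint (hS e) (hT e), Nat.cast_add]

lemma enumSeries_image {w : α → σ →₀ ℕ} {w' : β → σ →₀ ℕ} {f : α → β} {S : Set α} {d : σ →₀ ℕ}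
    (hf : Set.InjOn f S) (hw : ∀ a ∈ S, w' (f a) = w a + d) :
    enumSeries R w' (f '' S) = MvPowerSeries.monomial d 1 * enumSeries R w S := by
  classical
  ext e
  rw [coeff_enumSeries, MvPowerSeries.coeff_monomial_mul]
  split_ifs with hde
  · have fiber_eq : {b ∈ f '' S | w' b = e} = f '' {a ∈ S | w a = e - d} := by
      ext b
      constructor
      · rintro ⟨⟨a, ha, rfl⟩, rfl⟩
        exact ⟨a, ⟨ha, by rw [hw a ha, add_tsub_cancel_right]⟩, rfl⟩
      · rintro ⟨a, ⟨ha, hwa⟩, rfl⟩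
        exact ⟨⟨a, ha, rfl⟩, by rw [hw a ha, hwa, tsub_add_cancel_of_le hde]⟩
    rw [fiber_eq, (hf.mono (Set.sep_subset _ _)).ncard_image, one_mul, coeff_enumSeries]
  · have fiber_eq : {b ∈ f '' S | w' b = e} = ∅ := by
      rw [Set.eq_empty_iff_forall_notMem]
      rintro _ ⟨⟨a, ha, rfl⟩, rfl⟩
      exact hde (hw a ha ▸ le_add_self)
    rw [fiber_eq, Set.ncard_empty, Nat.cast_zero]

end EnumeratingSeries

section ExponentVectors

/-- The exponent vector of the monomial `x ^ a * y ^ l * z ^ j * q ^ n`. -/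
noncomputable def exponentVector (a l j n : ℕ) : Fin 4 →₀ ℕ :=
  Finsupp.equivFunOnFinite.symm ![a, l, j, n]

lemma exponentVector_eq_iff {a l j n : ℕ} {e : Fin 4 →₀ ℕ} :
    exponentVector a l j n = e ↔ a = e 0 ∧ l = e 1 ∧ j = e 2 ∧ n = e 3 := by
  rw [Finsupp.ext_iff]
  simp [Fin.forall_fin_succ, exponentVector]

lemma exponentVector_add (a l j n a' l' j' n' : ℕ) :
    exponentVector a l j n + exponentVector a' l' j' n' =
      exponentVector (a + a') (l + l') (j + j') (n + n') := by
  rw [eq_comm, exponentVector_eq_iff]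
  simp [exponentVector]

open MvPowerSeries in
lemma monomial_exponentVector {R : Type*} [CommSemiring R] (a l j n : ℕ) :
    monomial (exponentVector a l j n) (1 : R) =
      X 0 ^ a * X 1 ^ l * X 2 ^ j * X 3 ^ n := by
  simp only [X_pow_eq, monomial_mul_monomial, mul_one]
  congr 2
  rw [exponentVector_eq_iff]
  simp

end ExponentVectors

section Multisets

variable {α : Type*}

lemma sup_mem_of_ne_zero [LinearOrder α] [OrderBot α] {M : Multiset α} (hM : M ≠ 0) :
    M.sup ∈ M := by
  obtain ⟨m, hm, m_max⟩ := Multiset.exists_max_image id hM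
  rwa [le_antisymm (Multiset.sup_le.2 m_max) (Multiset.le_sup hm)]

lemma notMem_of_sup_lt [SemilatticeSup α] [OrderBot α] {M : Multiset α} {a : α}
    (h : M.sup < a) : a ∉ M :=
  fun ha => (Multiset.le_sup ha).not_gt h

lemma sup_lt_of_notMem [LinearOrder α] [OrderBot α] {M : Multiset α} {a : α}
    (ha : ⊥ < a) (hle : M.sup ≤ a) (hM : a ∉ M) : M.sup < a := by
  refine hle.lt_of_ne ?_
  rintro rfl
  rcases eq_or_ne M 0 with rfl | hM0
  · exact ha.ne Multiset.sup_zero.symm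
  · exact hM (sup_mem_of_ne_zero hM0)

lemma sup_cons_of_sup_lt [SemilatticeSup α] [OrderBot α] {M : Multiset α} {a : α}
    (h : M.sup < a) : (a ::ₘ M).sup = a := by
  rw [Multiset.sup_cons, sup_eq_left.2 h.le]

lemma cons_eq_cons_iff_of_sup_lt [SemilatticeSup α] [OrderBot α] {M N : Multiset α}
    {a b : α} (hM : M.sup < a) (hN : N.sup < b) : a ::ₘ M = b ::ₘ N ↔ a = b ∧ M = N := by
  refine ⟨fun h => ?_, fun ⟨hab, hMN⟩ => by rw [hab, hMN]⟩
  have hab : a = b := by rw [← sup_cons_of_sup_lt hM, h, sup_cons_of_sup_lt hN]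
  subst hab
  exact ⟨rfl, (Multiset.cons_inj_right a).1 h⟩

lemma finite_setOf_multiset_sup_le_card_le [LinearOrder α] [OrderBot α]
    [LocallyFiniteOrderBot α] (a : α) (l : ℕ) :
    {M : Multiset α | M.sup ≤ a ∧ Multiset.card M ≤ l}.Finite := by
  refine (Set.finite_Iic (l • (Finset.Iic a).val)).subset ?_
  rintro M ⟨hsup, hcard⟩
  rw [Set.mem_Iic, Multiset.le_iff_count]
  intro x
  by_cases hx : x ∈ M
  · have hxa : x ∈ (Finset.Iic a).val := Finset.mem_Iic.2 ((Multiset.le_sup hx).trans hsup)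
    rw [Multiset.count_nsmul, Multiset.count_eq_one_of_mem (Finset.Iic a).nodup hxa, mul_one]
    exact (Multiset.count_le_card x M).trans hcard
  · rw [Multiset.count_eq_zero_of_notMem hx]
    exact Nat.zero_le _

/-- The number of distinct values occurring at least twice in a multiset, the statistic `j` of
`FDt`. -/
def numRepeated [DecidableEq α] (M : Multiset α) : ℕ :=
  (M.toFinset.filter fun v => 2 ≤ M.count v).card

lemma numRepeated_cons [DecidableEq α] (b : α) (M : Multiset α) :
    numRepeated (b ::ₘ M) = numRepeated M + if M.count b = 1 then 1 else 0 := by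
  unfold numRepeated
  split_ifs with hb
  · have hb_notMem : b ∉ M.toFinset.filter fun v => 2 ≤ M.count v := by simp [hb]
    rw [← Finset.card_insert_of_notMem hb_notMem]
    congr 1
    ext v
    by_cases hv : v = b
    · simp [hv, hb]
    · simp [hv, Multiset.count_cons_of_ne hv]
  · rw [add_zero]
    congr 1
    ext v
    by_cases hv : v = b
    · subst hv
      simp only [Finset.mem_filter, Multiset.mem_toFinset, Multiset.count_cons_self,
        ← Multiset.count_pos]
      omega
    · simp [hv, Multiset.count_cons_of_ne hv]

lemma numRepeated_cons_of_notMem [DecidableEq α] {b : α} {M : Multiset α}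
    (hb : b ∉ M) : numRepeated (b ::ₘ M) = numRepeated M := by
  rw [numRepeated_cons, Multiset.count_eq_zero_of_notMem hb, if_neg zero_ne_one, add_zero]

end Multisets

section PartitionExponent

/-- The exponent of the monomial `x ^ α * y ^ lam * z ^ j * q ^ n` that a partition contributes to
`FDseries`. -/
noncomputable def partitionExponent (M : Multiset ℕ) : Fin 4 →₀ ℕ :=
  exponentVector M.sup (Multiset.card M) (numRepeated M) (perim M)

lemma finite_partitionExponent_fiber (S : Set (Multiset ℕ)) (e : Fin 4 →₀ ℕ) :
    {M ∈ S | partitionExponent M = e}.Finite := by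
  refine (finite_setOf_multiset_sup_le_card_le (e 0) (e 1)).subset ?_
  rintro M ⟨-, hM⟩
  obtain ⟨hsup, hcard, -⟩ := exponentVector_eq_iff.1 hM
  exact ⟨hsup.le, hcard.le⟩

lemma enumSeries_partitionExponent_union {R : Type*} [Semiring R] {S T : Set (Multiset ℕ)}
    (hST : Disjoint S T) :
    enumSeries R partitionExponent (S ∪ T) =
      enumSeries R partitionExponent S + enumSeries R partitionExponent T :=
  enumSeries_union hST (finite_partitionExponent_fiber S) (finite_partitionExponent_fiber T)

lemma IsPartition.sup_pos {M : Multiset ℕ} (hM : IsPartition M) : 0 < M.sup :=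
  hM.2 _ (sup_mem_of_ne_zero hM.1)

lemma IsPartition.count_sup_pos {M : Multiset ℕ} (hM : IsPartition M) : 0 < M.count M.sup :=
  Multiset.count_pos.2 (sup_mem_of_ne_zero hM.1)

lemma FDseries_eq_enumSeries :
    FDseries = enumSeries ℤ partitionExponent {M | IsPartition M} := by
  ext e
  rw [coeff_enumSeries]
  change FDseries e = _
  unfold FDseries
  split_ifs with he
  · unfold FDt
    congr 2
    ext M
    simp only [Set.mem_ofPred_eq, partitionExponent, exponentVector_eq_iff, numRepeated]
    tauto
  · have fiber_eq : {M ∈ {M | IsPartition M} | partitionExponent M = e} = ∅ := by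
      rw [Set.eq_empty_iff_forall_notMem]
      rintro M ⟨hM, hMe⟩
      obtain ⟨hsup, hcard, -, hperim⟩ := exponentVector_eq_iff.1 hMe
      have sup_pos := IsPartition.sup_pos hM
      have card_pos := Multiset.card_pos.2 hM.1
      unfold perim at hperim
      omega
    rw [fiber_eq, Set.ncard_empty, Nat.cast_zero]

lemma partitionExponent_cons_of_sup_lt {M : Multiset ℕ} {a : ℕ} (h : M.sup < a) :
    partitionExponent (a ::ₘ M) =
      exponentVector a (Multiset.card M + 1) (numRepeated M) (a + Multiset.card M) := by
  rw [partitionExponent, perim, sup_cons_of_sup_lt h, Multiset.card_cons,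
    numRepeated_cons_of_notMem (notMem_of_sup_lt h), ← add_assoc, Nat.add_sub_cancel]

end PartitionExponent

section LargestPart

/-- The partitions whose largest part occurs exactly once. -/
def uniqueLargest : Set (Multiset ℕ) :=
  {M | IsPartition M ∧ M.count M.sup = 1}

/-- The partitions whose largest part occurs at least twice. -/
def repeatedLargest : Set (Multiset ℕ) :=
  {M | IsPartition M ∧ 2 ≤ M.count M.sup}

lemma mem_uniqueLargest_iff {M : Multiset ℕ} :
    M ∈ uniqueLargest ↔ ∃ a N, N.sup < a ∧ (∀ x ∈ N, 0 < x) ∧ a ::ₘ N = M := by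
  constructor
  · rintro ⟨hM, hcount⟩
    obtain ⟨N, hMN⟩ := Multiset.exists_cons_of_mem (sup_mem_of_ne_zero hM.1)
    have hN : M.sup ∉ N := by
      rw [congrArg (Multiset.count M.sup) hMN, Multiset.count_cons_self] at hcount
      exact Multiset.count_eq_zero.1 (Nat.succ.inj hcount)
    have N_le : N ≤ M := hMN ▸ Multiset.le_cons_self N M.sup
    have sup_lt : N.sup < M.sup :=
      sup_lt_of_notMem hM.sup_pos (Multiset.sup_mono (Multiset.subset_of_le N_le)) hN
    exact ⟨M.sup, N, sup_lt, fun x hx => hM.2 x (Multiset.mem_of_le N_le hx), hMN.symm⟩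
  · rintro ⟨a, N, hNa, hN, rfl⟩
    refine ⟨⟨Multiset.cons_ne_zero, ?_⟩, ?_⟩
    · rw [Multiset.forall_mem_cons]
      exact ⟨Nat.zero_lt_of_lt hNa, hN⟩
    · rw [sup_cons_of_sup_lt hNa, Multiset.count_cons_self,
        Multiset.count_eq_zero_of_notMem (notMem_of_sup_lt hNa)]

lemma setOf_isPartition_eq_union : {M | IsPartition M} = uniqueLargest ∪ repeatedLargest := by
  ext M
  constructor
  · intro hM
    rcases Nat.eq_or_lt_of_le (Nat.succ_le_of_lt (IsPartition.count_sup_pos hM)) with h | h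
    · exact Or.inl ⟨hM, h.symm⟩
    · exact Or.inr ⟨hM, h⟩
  · rintro (hM | hM) <;> exact hM.1

lemma disjoint_uniqueLargest_repeatedLargest : Disjoint uniqueLargest repeatedLargest :=
  Set.disjoint_left.2 fun _ hU hR => hU.2.not_gt hR.2

end LargestPart

section DuplicateLargest

/-- Add another copy of the largest part. This is a bijection from partitions to partitions with
repeated largest part. -/
def duplicateLargest (M : Multiset ℕ) : Multiset ℕ :=
  M.sup ::ₘ M

lemma sup_duplicateLargest (M : Multiset ℕ) : (duplicateLargest M).sup = M.sup := by
  rw [duplicateLargest, Multiset.sup_cons, sup_idem]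

lemma duplicateLargest_injective : Function.Injective duplicateLargest := by
  intro M N h
  have hsup : M.sup = N.sup := by rw [← sup_duplicateLargest M, h, sup_duplicateLargest]
  rw [duplicateLargest, duplicateLargest, hsup] at h
  exact (Multiset.cons_inj_right _).1 h

lemma image_duplicateLargest : duplicateLargest '' {M | IsPartition M} = repeatedLargest := by
  ext M
  constructor
  · rintro ⟨N, hN, rfl⟩
    have sup_mem := sup_mem_of_ne_zero hN.1
    refine ⟨⟨Multiset.cons_ne_zero, Multiset.forall_mem_cons.2 ⟨hN.2 _ sup_mem, hN.2⟩⟩, ?_⟩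
    rw [sup_duplicateLargest, duplicateLargest, Multiset.count_cons_self]
    exact Nat.succ_le_succ (IsPartition.count_sup_pos hN)
  · rintro ⟨hM, hcount⟩
    obtain ⟨N, hMN⟩ := Multiset.exists_cons_of_mem (sup_mem_of_ne_zero hM.1)
    have N_le : N ≤ M := hMN ▸ Multiset.le_cons_self N M.sup
    have sup_mem : M.sup ∈ N := by
      rw [congrArg (Multiset.count M.sup) hMN, Multiset.count_cons_self] at hcount
      exact Multiset.count_pos.1 (Nat.le_of_succ_le_succ hcount)
    have sup_eq : N.sup = M.sup :=
      le_antisymm (Multiset.sup_mono (Multiset.subset_of_le N_le)) (Multiset.le_sup sup_mem)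
    have hN : IsPartition N :=
      ⟨fun h => by simp [h] at sup_mem, fun x hx => hM.2 x (Multiset.mem_of_le N_le hx)⟩
    exact ⟨N, hN, by rw [duplicateLargest, sup_eq, ← hMN]⟩

lemma partitionExponent_duplicateLargest {M : Multiset ℕ} (hM : M ≠ 0) :
    partitionExponent (duplicateLargest M) =
      partitionExponent M + exponentVector 0 1 (if M.count M.sup = 1 then 1 else 0) 1 := by
  have card_pos := Multiset.card_pos.2 hM
  have perim_eq : perim (duplicateLargest M) = perim M + 1 := by
    rw [perim, perim, sup_duplicateLargest, duplicateLargest, Multiset.card_cons]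
    omega
  rw [partitionExponent, partitionExponent, exponentVector_add, perim_eq, sup_duplicateLargest,
    duplicateLargest, Multiset.card_cons, numRepeated_cons, add_zero]

open MvPowerSeries in
lemma enumSeries_repeatedLargest (R : Type*) [CommSemiring R] :
    enumSeries R partitionExponent repeatedLargest =
      X 1 * X 2 * X 3 * enumSeries R partitionExponent uniqueLargest +
        X 1 * X 3 * enumSeries R partitionExponent repeatedLargest := by
  have image_unique : enumSeries R partitionExponent (duplicateLargest '' uniqueLargest) =
      monomial (exponentVector 0 1 1 1) 1 * enumSeries R partitionExponent uniqueLargest :=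
    enumSeries_image duplicateLargest_injective.injOn fun M hM => by
      rw [partitionExponent_duplicateLargest hM.1.1, if_pos hM.2]
  have image_repeated : enumSeries R partitionExponent (duplicateLargest '' repeatedLargest) =
      monomial (exponentVector 0 1 0 1) 1 * enumSeries R partitionExponent repeatedLargest :=
    enumSeries_image duplicateLargest_injective.injOn fun M hM => by
      rw [partitionExponent_duplicateLargest hM.1.1, if_neg (Nat.ne_of_gt hM.2)]
  have images_disjoint :
      Disjoint (duplicateLargest '' uniqueLargest) (duplicateLargest '' repeatedLargest) :=
    (Set.disjoint_image_iff duplicateLargest_injective).2 disjoint_uniqueLargest_repeatedLargest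
  conv_lhs => rw [← image_duplicateLargest, setOf_isPartition_eq_union, Set.image_union]
  rw [enumSeries_partitionExponent_union images_disjoint, image_unique, image_repeated]
  simp only [monomial_exponentVector, pow_zero, pow_one, one_mul, mul_one]

end DuplicateLargest

section RaiseAndExtendLargest

/-- Replace one copy of the largest part `a` by `a + 1`. From `uniqueLargest` this produces the
members of `uniqueLargest` with largest part `a + 1 ≥ 2` that do not have `a` as a part. -/
def raiseLargest (M : Multiset ℕ) : Multiset ℕ :=
  (M.sup + 1) ::ₘ M.erase M.sup

/-- Add a new part `a + 1`, where `a` is the largest part. From partitions this produces the members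
of `uniqueLargest` with largest part `a + 1` that have `a` as a part. -/
def extendLargest (M : Multiset ℕ) : Multiset ℕ :=
  (M.sup + 1) ::ₘ M

lemma raiseLargest_cons_of_sup_lt {M : Multiset ℕ} {a : ℕ} (h : M.sup < a) :
    raiseLargest (a ::ₘ M) = (a + 1) ::ₘ M := by
  rw [raiseLargest, sup_cons_of_sup_lt h, Multiset.erase_cons_head]

lemma raiseLargest_injOn : Set.InjOn raiseLargest uniqueLargest := by
  intro M hM N hN hMN
  obtain ⟨a, K, hKa, -, rfl⟩ := mem_uniqueLargest_iff.1 hM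
  obtain ⟨b, L, hLb, -, rfl⟩ := mem_uniqueLargest_iff.1 hN
  rw [raiseLargest_cons_of_sup_lt hKa, raiseLargest_cons_of_sup_lt hLb,
    cons_eq_cons_iff_of_sup_lt (hKa.trans a.lt_succ_self) (hLb.trans b.lt_succ_self)] at hMN
  rw [Nat.succ.inj hMN.1, hMN.2]

lemma extendLargest_injective : Function.Injective extendLargest := fun M N hMN =>
  ((cons_eq_cons_iff_of_sup_lt M.sup.lt_succ_self N.sup.lt_succ_self).1 hMN).2

lemma partitionExponent_raiseLargest {M : Multiset ℕ} (hM : M ∈ uniqueLargest) :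
    partitionExponent (raiseLargest M) = partitionExponent M + exponentVector 1 0 0 1 := by
  obtain ⟨a, N, hNa, -, rfl⟩ := mem_uniqueLargest_iff.1 hM
  rw [raiseLargest_cons_of_sup_lt hNa, partitionExponent_cons_of_sup_lt hNa,
    partitionExponent_cons_of_sup_lt (hNa.trans a.lt_succ_self), exponentVector_add,
    Nat.add_right_comm a 1, add_zero, add_zero]

lemma partitionExponent_extendLargest {M : Multiset ℕ} (hM : M ≠ 0) :
    partitionExponent (extendLargest M) = partitionExponent M + exponentVector 1 1 0 2 := by
  have card_pos := Multiset.card_pos.2 hM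
  have perim_eq : M.sup + 1 + Multiset.card M = perim M + 2 := by
    unfold perim
    omega
  rw [extendLargest, partitionExponent_cons_of_sup_lt M.sup.lt_succ_self, perim_eq,
    partitionExponent, exponentVector_add, add_zero]

lemma partitionExponent_singleton_one : partitionExponent {1} = exponentVector 1 1 0 1 := by
  rw [← Multiset.cons_zero, partitionExponent_cons_of_sup_lt (by simp)]
  simp [numRepeated]

lemma uniqueLargest_eq_union :
    uniqueLargest =
      {{1}} ∪ (raiseLargest '' uniqueLargest ∪ extendLargest '' {M | IsPartition M}) := by
  ext M
  constructor
  · intro hM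
    obtain ⟨a, N, hNa, hN, rfl⟩ := mem_uniqueLargest_iff.1 hM
    obtain ⟨b, rfl⟩ := Nat.exists_eq_succ_of_ne_zero (Nat.ne_zero_of_lt hNa)
    rcases (Nat.le_of_lt_succ hNa).lt_or_eq with hNb | rfl
    · exact Or.inr (Or.inl ⟨b ::ₘ N, mem_uniqueLargest_iff.2 ⟨b, N, hNb, hN, rfl⟩,
        raiseLargest_cons_of_sup_lt hNb⟩)
    · rcases eq_or_ne N 0 with rfl | hN0
      · exact Or.inl rfl
      · exact Or.inr (Or.inr ⟨N, ⟨hN0, hN⟩, rfl⟩)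
  · rw [mem_uniqueLargest_iff]
    rintro (rfl | ⟨N, hN, rfl⟩ | ⟨N, hN, rfl⟩)
    · exact ⟨1, 0, by simp⟩
    · obtain ⟨a, K, hKa, hK, rfl⟩ := mem_uniqueLargest_iff.1 hN
      exact ⟨a + 1, K, hKa.trans a.lt_succ_self, hK, (raiseLargest_cons_of_sup_lt hKa).symm⟩
    · exact ⟨N.sup + 1, N, N.sup.lt_succ_self, hN.2, rfl⟩

lemma disjoint_image_raiseLargest_image_extendLargest :
    Disjoint (raiseLargest '' uniqueLargest) (extendLargest '' {M | IsPartition M}) := by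
  rw [Set.disjoint_left]
  rintro _ ⟨M, hM, rfl⟩ ⟨N, -, hMN⟩
  obtain ⟨a, K, hKa, -, rfl⟩ := mem_uniqueLargest_iff.1 hM
  rw [raiseLargest_cons_of_sup_lt hKa, extendLargest,
    cons_eq_cons_iff_of_sup_lt N.sup.lt_succ_self (hKa.trans a.lt_succ_self)] at hMN
  obtain ⟨hsup, rfl⟩ := hMN
  exact hKa.ne (Nat.succ.inj hsup)

lemma disjoint_singleton_one_images :
    Disjoint {{1}} (raiseLargest '' uniqueLargest ∪ extendLargest '' {M | IsPartition M}) := by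
  have sup_zero_lt : (0 : Multiset ℕ).sup < 1 := by simp
  rw [Set.disjoint_singleton_left, ← Multiset.cons_zero]
  rintro (⟨M, hM, hM1⟩ | ⟨M, hM, hM1⟩)
  · obtain ⟨a, N, hNa, -, rfl⟩ := mem_uniqueLargest_iff.1 hM
    rw [raiseLargest_cons_of_sup_lt hNa,
      cons_eq_cons_iff_of_sup_lt (hNa.trans a.lt_succ_self) sup_zero_lt] at hM1
    exact Nat.ne_zero_of_lt hNa (Nat.succ.inj hM1.1)
  · rw [extendLargest, cons_eq_cons_iff_of_sup_lt M.sup.lt_succ_self sup_zero_lt] at hM1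
    exact hM.1 hM1.2

open MvPowerSeries in
lemma enumSeries_uniqueLargest (R : Type*) [CommSemiring R] :
    enumSeries R partitionExponent uniqueLargest =
      X 0 * X 1 * X 3 +
        (X 0 * X 3 * enumSeries R partitionExponent uniqueLargest +
          X 0 * X 1 * X 3 ^ 2 * enumSeries R partitionExponent {M | IsPartition M}) := by
  conv_lhs => rw [uniqueLargest_eq_union]
  rw [enumSeries_partitionExponent_union disjoint_singleton_one_images,
    enumSeries_partitionExponent_union disjoint_image_raiseLargest_image_extendLargest,
    enumSeries_singleton, partitionExponent_singleton_one,
    enumSeries_image raiseLargest_injOn fun _ hM => partitionExponent_raiseLargest hM,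
    enumSeries_image extendLargest_injective.injOn fun _ hM =>
      partitionExponent_extendLargest hM.1]
  simp only [monomial_exponentVector, pow_zero, pow_one, mul_one]

end RaiseAndExtendLargest

open MvPowerSeries in
theorem stmt_15 :
    ((1 : MvPowerSeries (Fin 4) ℤ) - (X 0 + X 1) * X 3
          + (1 - X 2) * X 0 * (X 1) ^ 2 * (X 3) ^ 3) * FDseries =
      X 0 * X 1 * X 3 * (1 - (1 - X 2) * X 1 * X 3) := by
  have F_eq : FDseries = enumSeries ℤ partitionExponent uniqueLargest +
      enumSeries ℤ partitionExponent repeatedLargest := by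
    rw [FDseries_eq_enumSeries, setOf_isPartition_eq_union,
      enumSeries_partitionExponent_union disjoint_uniqueLargest_repeatedLargest]
  have unique_eq := enumSeries_uniqueLargest ℤ
  rw [← FDseries_eq_enumSeries] at unique_eq
  have repeated_eq := enumSeries_repeatedLargest ℤ
  linear_combination (1 - X 0 * X 3) * (1 - X 1 * X 3) * F_eq + (1 - X 0 * X 3) * repeated_eq +
    (1 - (1 - X 2) * X 1 * X 3) * unique_eq
end
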